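/- Let $(A, \mathfrak{m})$ be a Cohen-Macaulay local ring of dimension $d > 0$ with infinite residue field, $I$ an $\mathfrak{m}$-primary ideal, and $Q$ a minimal reduction of $I$. If $e_1(I) = e_0(I) - \ell_A(A/I) + 1$, then $I^3 = QI^2$. -/

import Mathlib

open IsLocalRing

/-- A Noetherian local ring is Cohen–Macaulay of dimension `d` iff its Krull dimension
is `d` and there is a regular sequence of length `d` in the maximal ideal. -/
def IsCohenMacaulayLocal (A : Type*) [CommRing A] [IsLocalRing A] (d : ℕ) : Prop :=
  ringKrullDim A = d ∧
    ∃ rs : List A, rs.length = d ∧ (∀ x ∈ rs, x ∈ maximalIdeal A) ∧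
      RingTheory.Sequence.IsRegular A rs

/-- `I` is primary to the maximal ideal (i.e. `𝔪`-primary). -/
def IsPrimaryToMax (A : Type*) [CommRing A] [IsLocalRing A] (I : Ideal A) : Prop :=
  I ≤ maximalIdeal A ∧ maximalIdeal A ≤ I.radical

/-- The length of a module, as the Krull dimension of its submodule lattice. -/
noncomputable def moduleLength (A M : Type*) [CommRing A] [AddCommGroup M]
    [Module A M] : WithBot ℕ∞ :=
  Order.krullDim (Submodule A M)

section PrimeAvoidance

open CategoryTheory Abelian

universe u

/-- Davis' form of prime avoidance. -/
lemma Ideal.exists_add_notMem_of_finite_primes {A : Type*} [CommRing A] {S : Set (Ideal A)}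
    (hS : S.Finite) (hprime : ∀ p ∈ S, p.IsPrime) (x : A) (J : Ideal A)
    (h : ∀ p ∈ S, x ∈ p → ¬ J ≤ p) : ∃ y ∈ J, ∀ p ∈ S, x + y ∉ p := by
  classical
  set T : Set (Ideal A) := {p ∈ S | x ∈ p}
  set U : Set (Ideal A) := {p ∈ S | ∀ t ∈ T, ¬ p ≤ t}
  have hT : T.Finite := hS.subset fun p hp ↦ hp.1
  have hU : U.Finite := hS.subset fun p hp ↦ hp.1
  set L : Ideal A := ∏ p ∈ hU.toFinset, p with hL
  obtain ⟨y, hy, hyT⟩ : ∃ y ∈ J * L, ∀ t ∈ T, y ∉ t := by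
    by_contra! hcon
    have hsub : ((J * L : Ideal A) : Set A) ⊆ ⋃ t ∈ T, (t : Set A) := by
      intro y hy
      obtain ⟨t, ht, hyt⟩ := hcon y hy
      exact Set.mem_biUnion ht hyt
    obtain ⟨t, ht, hle⟩ := (Ideal.subset_union_prime_finite hT (f := id) ⊥ ⊥
      fun p hp _ _ ↦ hprime p hp.1).1 hsub
    have htp := hprime t ht.1
    rcases htp.mul_le.1 hle with hJ | hprod
    · exact h t ht.1 ht.2 hJ
    · obtain ⟨p, hp, hpt⟩ := htp.prod_le.1 hprod
      exact (hU.mem_toFinset.1 hp).2 t ht hpt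
  refine ⟨y, Ideal.mul_le_left hy, fun p hp hxy ↦ ?_⟩
  by_cases hxp : x ∈ p
  · exact hyT p ⟨hp, hxp⟩ ((p.add_mem_iff_right hxp).1 hxy)
  · by_cases hpU : p ∈ U
    · have hyp : y ∈ p := by
        have h1 : L ≤ p :=
          Ideal.prod_le_inf.trans (Finset.inf_le (f := id) (hU.mem_toFinset.2 hpU))
        exact h1 (Ideal.mul_le_right hy)
      exact hxp ((p.add_mem_iff_left hyp).1 hxy)
    · simp only [U, Set.mem_ofPred_eq, not_and, not_forall, not_not] at hpU
      obtain ⟨t, ht, hpt⟩ := hpU hp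
      exact hyT t ht ((t.add_mem_iff_right ht.2).1 (hpt hxy))

/-- A system of parameters of a module of large enough depth can be replaced by a regular
sequence generating the same ideal. -/
lemma IsLocalRing.exists_isWeaklyRegular_ofList_eq {A : Type u} [CommRing A] [IsLocalRing A]
    [IsNoetherianRing A] (l : List A) (M : ModuleCat.{u} A) [Module.Finite A M]
    (hext : ∀ i < l.length, Subsingleton (Ext (ModuleCat.of A (A ⧸ maximalIdeal A)) M i))
    (K : Ideal A) (hK : K ≤ Module.annihilator A M)
    (hl : maximalIdeal A ≤ (K ⊔ Ideal.ofList l).radical) :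
    ∃ l' : List A, l'.length = l.length ∧ RingTheory.Sequence.IsWeaklyRegular M l' ∧
      K ⊔ Ideal.ofList l' = K ⊔ Ideal.ofList l := by
  induction l generalizing M K with
  | nil => exact ⟨[], rfl, .nil _ _, rfl⟩
  | cons a l ih =>
    have hmax : maximalIdeal A ∉ associatedPrimes A M := by
      intro hm
      obtain ⟨-, f, hf⟩ := (isAssociatedPrime_iff_exists_injective_linearMap _ _).1
        (AssociatedPrimes.mem_iff.1 hm)
      have := hext 0 (by simp)
      have h1 : Subsingleton (ModuleCat.of A (A ⧸ maximalIdeal A) ⟶ M) :=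
        Ext.addEquiv₀.subsingleton_congr.mp this
      have h2 : Subsingleton ((A ⧸ maximalIdeal A) →ₗ[A] M) :=
        (ModuleCat.homAddEquiv (M := ModuleCat.of A (A ⧸ maximalIdeal A))
          (N := M)).symm.subsingleton
      have h3 : (1 : A ⧸ maximalIdeal A) = 0 := hf (by rw [Subsingleton.elim f 0]; simp)
      exact one_ne_zero h3
    obtain ⟨y, hy, hreg⟩ := Ideal.exists_add_notMem_of_finite_primes
      (associatedPrimes.finite A M) (fun p hp ↦ hp.isPrime) a (Ideal.ofList l) (by
        intro p hp hap hlp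
        have hprime := hp.isPrime
        have hKp : K ≤ p := hK.trans (by
        simpa [Submodule.annihilator_top] using hp.annihilator_le)
        have : maximalIdeal A ≤ p := hl.trans (hprime.radical_le_iff.2 (sup_le hKp (by
          rw [Ideal.ofList_cons]
          exact sup_le ((Ideal.span_singleton_le_iff_mem p).2 hap) hlp)))
        have := (maximalIdeal.isMaximal A).eq_of_le hprime.ne_top this
        exact hmax (this ▸ hp))
    set b := a + y
    have hb : IsSMulRegular M b := by
      have := biUnion_associatedPrimes_eq_compl_regular A M
      by_contra hcon
      have hb' : b ∈ ({r : A | IsSMulRegular M r}ᶜ : Set A) := hcon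
      rw [← this] at hb'
      simp only [Set.mem_iUnion] at hb'
      obtain ⟨p, hp, hbp⟩ := hb'
      exact hreg p hp hbp
    have hspan : Ideal.span {b} ⊔ Ideal.ofList l = Ideal.ofList (a :: l) := by
      rw [Ideal.ofList_cons]
      apply le_antisymm
      · refine sup_le ((Ideal.span_singleton_le_iff_mem _).2 ?_) le_sup_right
        exact add_mem (Ideal.mem_sup_left (Ideal.mem_span_singleton_self a))
          (Ideal.mem_sup_right hy)
      · refine sup_le ((Ideal.span_singleton_le_iff_mem _).2 ?_) le_sup_right
        have : a = b - y := by simp [b]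
        rw [this]
        exact sub_mem (Ideal.mem_sup_left (Ideal.mem_span_singleton_self b))
          (Ideal.mem_sup_right hy)
    obtain ⟨l', hlen, hwr, heq⟩ := ih (ModuleCat.of A (QuotSMulTop b M)) (by
        intro i hi
        have zero1 := AddCommGrpCat.isZero_of_iff_subsingleton.mpr (hext i (by simp; omega))
        have zero2 := AddCommGrpCat.isZero_of_iff_subsingleton.mpr (hext (i + 1) (by simpa))
        exact AddCommGrpCat.subsingleton_of_isZero <| ShortComplex.Exact.isZero_of_both_zeros
          ((Ext.covariant_sequence_exact₃' _ hb.smulShortComplex_shortExact) i (i + 1) rfl)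
          (zero1.eq_zero_of_src _) (zero2.eq_zero_of_tgt _))
      (K ⊔ Ideal.span {b}) (by
        refine sup_le (hK.trans ?_) ((Ideal.span_singleton_le_iff_mem _).2 ?_)
        · exact LinearMap.annihilator_le_of_surjective _ (Submodule.mkQ_surjective _)
        · rw [Module.mem_annihilator]
          intro x
          obtain ⟨x, rfl⟩ := Submodule.mkQ_surjective _ x
          rw [← map_smul, Submodule.mkQ_apply, Submodule.Quotient.mk_eq_zero]
          exact Submodule.smul_mem_pointwise_smul _ _ _ trivial)
      (by rw [sup_assoc, hspan]; exact hl)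
    refine ⟨b :: l', by simp [hlen],
      (RingTheory.Sequence.isWeaklyRegular_cons_iff _ _ _).2 ⟨hb, hwr⟩, ?_⟩
    rw [Ideal.ofList_cons, ← sup_assoc, heq, sup_assoc, hspan]

end PrimeAvoidance

section QuasiRegular

open MvPolynomial

variable {A : Type*} [CommRing A] {d : ℕ}

/-- Elements of `J Q ^ n` are the values of forms of degree `n` with coefficients in `J`. -/
lemma Ideal.mem_mul_span_pow_iff (J : Ideal A) (a : Fin d → A) (n : ℕ) (y : A) :
    y ∈ J * Ideal.span (Set.range a) ^ n ↔
      ∃ F : MvPolynomial (Fin d) A, F.IsHomogeneous n ∧ F ∈ J.map (C : A →+* _) ∧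
        eval a F = y := by
  constructor
  · intro hy
    induction hy using Submodule.mul_induction_on' with
    | mem_mul_mem x hx z hz =>
      obtain ⟨p, hp, rfl⟩ := (Ideal.mem_span_pow_iff_exists_isHomogeneous a z).1 hz
      exact ⟨C x * p, hp.C_mul x, Ideal.mul_mem_right _ _ (Ideal.mem_map_of_mem _ hx), by simp⟩
    | add x _ z _ hx hz =>
      obtain ⟨F, hF, hFJ, rfl⟩ := hx
      obtain ⟨G, hG, hGJ, rfl⟩ := hz
      exact ⟨F + G, hF.add hG, add_mem hFJ hGJ, by simp⟩
  · rintro ⟨F, hF, hFJ, rfl⟩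
    rw [eval_eq]
    refine Submodule.sum_mem _ fun α hα ↦ Ideal.mul_mem_mul (MvPolynomial.mem_map_C_iff.1 hFJ α) ?_
    refine (Ideal.mem_span_pow_iff_exists_isHomogeneous a _).2 ⟨monomial α 1, ?_, ?_⟩
    · refine isHomogeneous_monomial _ ?_
      by_contra hne
      exact (mem_support_iff.1 hα) (hF.coeff_eq_zero hne)
    · rw [eval_monomial, one_mul, Finsupp.prod]

/-- The elements `a` are quasi-regular: a form vanishing at `a` has all its coefficients in the
ideal generated by `a`. -/
def IsQuasiRegularFamily (a : Fin d → A) : Prop :=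
  ∀ n (F : MvPolynomial (Fin d) A), F.IsHomogeneous n → eval a F = 0 →
    F ∈ (Ideal.span (Set.range a)).map (C : A →+* MvPolynomial (Fin d) A)

lemma IsQuasiRegularFamily.mem_map_of_eval_mem {a : Fin d → A} (ha : IsQuasiRegularFamily a)
    {J : Ideal A} (hJ : Ideal.span (Set.range a) ≤ J) {n : ℕ} {F : MvPolynomial (Fin d) A}
    (hF : F.IsHomogeneous n) (h : eval a F ∈ J * Ideal.span (Set.range a) ^ n) :
    F ∈ J.map (C : A →+* MvPolynomial (Fin d) A) := by
  obtain ⟨G, hG, hGJ, hGF⟩ := (Ideal.mem_mul_span_pow_iff J a n _).1 h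
  have h1 := ha n (F - G) (hF.sub hG) (by simp [hGF])
  simpa using add_mem (Ideal.map_mono hJ h1) hGJ

lemma IsQuasiRegularFamily.mem_span_pow_of_mul_mem {a : Fin d → A} (ha : IsQuasiRegularFamily a)
    {b : A} (hb : ∀ x, b * x ∈ Ideal.span (Set.range a) → x ∈ Ideal.span (Set.range a)) (k : ℕ)
    {x : A} (hx : b * x ∈ Ideal.span (Set.range a) ^ k) : x ∈ Ideal.span (Set.range a) ^ k := by
  induction k with
  | zero => simp
  | succ k ih =>
    obtain ⟨g, hg, rfl⟩ := (Ideal.mem_span_pow_iff_exists_isHomogeneous a _).1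
      (ih (Ideal.pow_le_pow_right k.le_succ hx))
    have h1 := ha.mem_map_of_eval_mem le_rfl (hg.C_mul b) (by simpa [← pow_succ'] using hx)
    rw [pow_succ']
    refine (Ideal.mem_mul_span_pow_iff _ a k _).2 ⟨g, hg,
      MvPolynomial.mem_map_C_iff.2 fun α ↦ hb _ ?_, rfl⟩
    simpa using MvPolynomial.mem_map_C_iff.1 h1 α

lemma IsQuasiRegularFamily.cons {a : Fin d → A} (ha : IsQuasiRegularFamily a) {b : A}
    (hb : ∀ x, b * x ∈ Ideal.span (Set.range a) → x ∈ Ideal.span (Set.range a)) :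
    IsQuasiRegularFamily (Fin.cons b a : Fin (d + 1) → A) := by
  set P := Ideal.span (Set.range a) with hP
  set Q := Ideal.span (Set.range (Fin.cons b a : Fin (d + 1) → A)) with hQ
  have hPQ : P ≤ Q := by
    refine Ideal.span_mono ?_
    rintro _ ⟨i, rfl⟩
    exact ⟨i.succ, by simp⟩
  have hbQ : b ∈ Q := Ideal.subset_span ⟨0, by simp⟩
  intro n
  induction n with
  | zero =>
    intro F hF h0
    obtain ⟨c, rfl⟩ : ∃ c, F = C c := ⟨_, totalDegree_eq_zero_iff_eq_C.1
      ((totalDegree_zero_iff_isHomogeneous _).2 hF)⟩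
    simp only [eval_C] at h0
    simp [h0]
  | succ n ih =>
    intro F hF h0
    set p := finSuccEquiv A d F with hp
    set G := p.coeff 0 with hG
    set H := (finSuccEquiv A d).symm p.divX with hH
    have hGhom : G.IsHomogeneous (n + 1) :=
      hF.finSuccEquiv_coeff_isHomogeneous 0 (n + 1) (by simp)
    have hcoeff : ∀ (i : ℕ) (α : Fin d →₀ ℕ), coeff (α.cons i) H = coeff (α.cons (i + 1)) F := by
      intro i α
      rw [← finSuccEquiv_coeff_coeff, ← finSuccEquiv_coeff_coeff, hH, AlgEquiv.apply_symm_apply,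
        Polynomial.coeff_divX]
    have hHhom : H.IsHomogeneous n := by
      intro α hα
      rw [← Finsupp.cons_tail α, hcoeff] at hα
      have := hF hα
      rw [← Finsupp.cons_tail α]
      have hw (γ : Fin (d + 1) →₀ ℕ) : Finsupp.weight (1 : Fin (d + 1) → ℕ) γ = ∑ i, γ i := by
        simp [Finsupp.weight_apply, Finsupp.sum_fintype]
      rw [hw, Fin.sum_univ_succ] at this ⊢
      simp only [Finsupp.cons_zero, Finsupp.cons_succ] at this ⊢
      omega
    have hev : ∀ f, eval (Fin.cons b a : Fin (d + 1) → A) f =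
        Polynomial.eval b ((finSuccEquiv A d f).map (eval a)) := eval_eq_eval_mv_eval' a b
    have hsplit : b * eval (Fin.cons b a : Fin (d + 1) → A) H + eval a G = 0 := by
      rw [hev, hH, AlgEquiv.apply_symm_apply, ← h0, hev, ← hp]
      conv_rhs => rw [← Polynomial.X_mul_divX_add p]
      simp [← hG]
    have hHP : eval (Fin.cons b a : Fin (d + 1) → A) H ∈ P ^ (n + 1) := by
      refine ha.mem_span_pow_of_mul_mem hb _ ?_
      rw [eq_neg_of_add_eq_zero_left hsplit]
      exact neg_mem ((Ideal.mem_span_pow_iff_exists_isHomogeneous a _).2 ⟨G, hGhom, rfl⟩)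
    obtain ⟨h, hh, hhH⟩ := (Ideal.mem_span_pow_iff_exists_isHomogeneous a _).1 hHP
    have hHQ : H ∈ Q.map (C : A →+* MvPolynomial (Fin (d + 1)) A) := by
      obtain ⟨K, hK, hKQ, hKH⟩ := (Ideal.mem_mul_span_pow_iff Q (Fin.cons b a) n
        (eval (Fin.cons b a : Fin (d + 1) → A) H)).1 (by
          rw [← hQ, ← pow_succ']
          exact Ideal.pow_right_mono hPQ _ hHP)
      have h1 := ih (H - K) (hHhom.sub hK) (by simp [hKH])
      rw [← hQ] at h1
      simpa only [sub_add_cancel] using add_mem h1 hKQ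
    have hGQ : ∀ α, coeff α G ∈ Q := by
      intro α
      have h1 := ha (n + 1) (C b * h + G) ((hh.C_mul b).add hGhom) (by simp [hhH, hsplit])
      have h2 := hPQ (MvPolynomial.mem_map_C_iff.1 h1 α)
      simp only [coeff_add, coeff_C_mul] at h2
      exact (Q.add_mem_iff_right (Q.mul_mem_right _ hbQ)).1 h2
    rw [MvPolynomial.mem_map_C_iff]
    intro α
    rw [← Finsupp.cons_tail α]
    cases α 0 with
    | zero =>
      rw [← finSuccEquiv_coeff_coeff]
      exact hGQ _
    | succ i =>
      rw [← hcoeff]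
      exact MvPolynomial.mem_map_C_iff.1 hHQ _

open RingTheory.Sequence in
/-- A regular sequence, read backwards, is quasi-regular. -/
lemma RingTheory.Sequence.IsWeaklyRegular.isQuasiRegularFamily {l : List A}
    (h : IsWeaklyRegular A l.reverse) : IsQuasiRegularFamily (fun i : Fin l.length ↦ l[i]) := by
  induction l with
  | nil =>
    intro n F _ h0
    have : IsEmpty (Fin ([] : List A).length) := Fin.isEmpty
    rw [eq_C_of_isEmpty F, eval_C] at h0
    rw [eq_C_of_isEmpty F, h0]
    simp
  | cons b l ih =>
    rw [List.reverse_cons, isWeaklyRegular_append_iff, isWeaklyRegular_singleton_iff] at h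
    have h1 := (ih h.1).cons (b := b) (by
      intro x hx
      have hs : Ideal.span (Set.range fun i : Fin l.length ↦ l[i]) =
          (Ideal.ofList l.reverse • ⊤ : Submodule A A) := by
        simp [Ideal.ofList]
        congr 1
        ext x
        simp [List.mem_iff_get]
      rw [hs] at hx ⊢
      rw [← Submodule.Quotient.mk_eq_zero] at hx ⊢
      refine h.2 ?_
      simp only [smul_zero]
      exact hx)
    have heq : (fun i : Fin (l.length + 1) ↦ (b :: l)[i]) = Fin.cons b (fun i ↦ l[i]) := by
      funext i
      refine Fin.cases ?_ (fun i ↦ ?_) i <;> simp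
    exact heq ▸ h1

open RingTheory.Sequence in
/-- In a Noetherian local ring of depth at least `d`, an `𝔪`-primary ideal with `d` generators is
generated by a quasi-regular family. -/
lemma IsLocalRing.exists_isQuasiRegularFamily [IsLocalRing A] [IsNoetherianRing A]
    {rs : List A} (hlen : rs.length = d) (hmem : ∀ x ∈ rs, x ∈ maximalIdeal A)
    (hrs : IsRegular A rs) (a : Fin d → A) (ha : Ideal.span (Set.range a) ≤ maximalIdeal A)
    (hrad : maximalIdeal A ≤ (Ideal.span (Set.range a)).radical) :
    ∃ b : Fin d → A, Ideal.span (Set.range b) = Ideal.span (Set.range a) ∧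
      IsQuasiRegularFamily b := by
  have hofList : Ideal.ofList (List.ofFn a) = Ideal.span (Set.range a) := by
    simp only [Ideal.ofList]
    congr 1
    ext x
    simp [List.mem_ofFn]
  have hlt : (maximalIdeal A) • (⊤ : Submodule A A) < ⊤ := by
    rw [smul_eq_mul, Ideal.mul_top]
    exact (maximalIdeal.isMaximal A).ne_top.lt_top
  obtain ⟨l, hl, hreg, hspan⟩ := exists_isWeaklyRegular_ofList_eq (List.ofFn a) (ModuleCat.of A A)
    (by
      intro i hi
      refine ModuleCat.subsingleton_ext_of_exists_isRegular (maximalIdeal A)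
        (ModuleCat.of A (A ⧸ maximalIdeal A)) ?_ (ModuleCat.of A A) hlt rs hmem hrs i ?_
      · rw [Module.support_eq_zeroLocus, Ideal.annihilator_quotient]
      · simpa [hlen] using hi)
    ⊥ bot_le (by simpa [hofList] using hrad)
  rw [bot_sup_eq, bot_sup_eq, hofList] at hspan
  have hperm : IsWeaklyRegular A l.reverse :=
    isWeaklyRegular_of_perm_of_subset_maximalIdeal hreg l.reverse_perm.symm fun r hr ↦
      ha (hspan ▸ Ideal.subset_span hr)
  have hld : l.length = d := by simpa using hl
  subst hld
  refine ⟨fun i ↦ l[i], ?_, hperm.isQuasiRegularFamily⟩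
  rw [← hspan, Ideal.ofList]
  congr 1
  ext x
  simp [List.mem_iff_get]

end QuasiRegular

section Primitive

open MvPolynomial

variable {A : Type*} [CommRing A] [IsLocalRing A] {d : ℕ}

/-- A polynomial with a unit coefficient is a nonzerodivisor modulo every ideal. -/
lemma MvPolynomial.mem_map_C_of_mul_mem {f g : MvPolynomial (Fin d) A} (hf : map (residue A) f ≠ 0)
    {J : Ideal A} (hfg : f * g ∈ J.map (C : A →+* MvPolynomial (Fin d) A)) :
    g ∈ J.map (C : A →+* MvPolynomial (Fin d) A) := by
  classical
  rw [MvPolynomial.mem_map_C_iff] at hfg ⊢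
  set c : Ideal A := Ideal.span (Set.range fun α ↦ coeff α g) with hc
  have hgc (α) : coeff α g ∈ c := Ideal.subset_span ⟨α, rfl⟩
  have hfg' : c.FG := by
    refine ⟨g.support.image fun α ↦ coeff α g, le_antisymm (Ideal.span_mono ?_)
      (Ideal.span_le.2 ?_)⟩
    · intro x hx
      obtain ⟨α, -, rfl⟩ := Finset.mem_image.1 hx
      exact ⟨α, rfl⟩
    · rintro _ ⟨α, rfl⟩
      by_cases hα : coeff α g = 0
      · simp [hα]
      · exact Ideal.subset_span (Finset.mem_image_of_mem _ (mem_support_iff.2 hα))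
  set J' : Ideal A := J ⊔ maximalIdeal A • c with hJ'
  suffices h : ∀ α, coeff α g ∈ J' by
    have h1 : c ≤ J := Submodule.le_of_le_smul_of_le_jacobson_bot hfg'
      (maximalIdeal_le_jacobson _) (Ideal.span_le.2 (by rintro _ ⟨α, rfl⟩; exact h α))
    exact fun α ↦ h1 (hgc α)
  by_contra! hcon
  obtain ⟨α₀, hα₀, hαmax⟩ := Finset.exists_max_image (map (residue A) f).support toLex
    (support_nonempty.2 hf)
  have hB : (g.support.filter fun α ↦ coeff α g ∉ J').Nonempty := by
    obtain ⟨α, hα⟩ := hcon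
    exact ⟨α, Finset.mem_filter.2 ⟨mem_support_iff.2 fun h0 ↦ hα (h0 ▸ J'.zero_mem), hα⟩⟩
  obtain ⟨β₀, hβ₀, hβmax⟩ := Finset.exists_max_image _ toLex hB
  rw [Finset.mem_filter] at hβ₀
  have hunit : IsUnit (coeff α₀ f) := by
    rw [mem_support_iff, coeff_map] at hα₀
    exact (residue_ne_zero_iff_isUnit _).1 hα₀
  have hsum : coeff (α₀ + β₀) (f * g) ∈ J' := Ideal.mem_sup_left (hfg _)
  rw [coeff_mul, ← Finset.add_sum_erase _ _
    (Finset.HasAntidiagonal.mem_antidiagonal (a := (α₀, β₀)).2 rfl)] at hsum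
  have hrest : ∑ x ∈ (Finset.HasAntidiagonal.antidiagonal (α₀ + β₀)).erase (α₀, β₀),
      coeff x.1 f * coeff x.2 g ∈
      J' := by
    refine Submodule.sum_mem _ fun x hx ↦ ?_
    obtain ⟨hne, hx⟩ := Finset.mem_erase.1 hx
    rw [Finset.HasAntidiagonal.mem_antidiagonal] at hx
    rcases lt_trichotomy (toLex x.1) (toLex α₀) with hlt | heq | hgt
    · have hlt2 : toLex β₀ < toLex x.2 := by
        by_contra! hle
        have := add_lt_add_of_lt_of_le hlt hle
        rw [← toLex_add, ← toLex_add, hx] at this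
        exact lt_irrefl _ this
      refine J'.mul_mem_left _ ?_
      by_contra hnot
      refine absurd (hβmax x.2 (Finset.mem_filter.2 ⟨mem_support_iff.2 fun h0 ↦ ?_, hnot⟩))
        (not_le.2 hlt2)
      exact hnot (h0 ▸ J'.zero_mem)
    · have h1 : x.1 = α₀ := toLex.injective heq
      refine absurd (Prod.ext h1 ?_) hne
      rw [h1] at hx
      exact add_left_cancel hx
    · have h1 : coeff x.1 f ∈ maximalIdeal A := by
        by_contra hnot
        refine absurd (hαmax x.1 (mem_support_iff.2 ?_)) (not_le.2 hgt)
        rw [coeff_map]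
        exact fun h ↦ hnot ((residue_eq_zero_iff _).1 h)
      exact Ideal.mem_sup_right (Submodule.smul_mem_smul h1 (hgc _))
  exact hβ₀.2 ((J'.unit_mul_mem_iff_mem hunit).1 ((J'.add_mem_iff_left hrest).1 hsum))

/-- Multiplication by a primitive form in a quasi-regular family generating `Q` is injective on
`A / Q ^ m`, up to the shift by its degree. -/
lemma IsQuasiRegularFamily.mem_pow_of_eval_mul_mem {a : Fin d → A} (ha : IsQuasiRegularFamily a)
    {f : MvPolynomial (Fin d) A} {n : ℕ} (hf : f.IsHomogeneous n) (hf0 : map (residue A) f ≠ 0)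
    {x : A} {m : ℕ} (hx : eval a f * x ∈ Ideal.span (Set.range a) ^ (n + m)) :
    x ∈ Ideal.span (Set.range a) ^ m := by
  induction m with
  | zero => simp
  | succ m ih =>
    obtain ⟨g, hg, rfl⟩ := (Ideal.mem_span_pow_iff_exists_isHomogeneous a _).1
      (ih (Ideal.pow_le_pow_right (by omega) hx))
    have h1 := ha.mem_map_of_eval_mem le_rfl (hf.mul hg) (by
      rw [← pow_succ', map_mul]
      exact hx)
    rw [pow_succ']
    exact (Ideal.mem_mul_span_pow_iff _ a m _).2 ⟨g, hg, mem_map_C_of_mul_mem hf0 h1, rfl⟩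

lemma IsQuasiRegularFamily.mem_mul_pow_of_eval_mul_mem {a : Fin d → A}
    (ha : IsQuasiRegularFamily a) {J : Ideal A} (hJ : Ideal.span (Set.range a) ≤ J)
    {f : MvPolynomial (Fin d) A} {n : ℕ} (hf : f.IsHomogeneous n) (hf0 : map (residue A) f ≠ 0)
    {x : A} {m : ℕ} (hx : eval a f * x ∈ J * Ideal.span (Set.range a) ^ (n + m)) :
    x ∈ J * Ideal.span (Set.range a) ^ m := by
  obtain ⟨g, hg, rfl⟩ := (Ideal.mem_span_pow_iff_exists_isHomogeneous a _).1
    (ha.mem_pow_of_eval_mul_mem hf hf0 (Ideal.mul_le_right hx))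
  have h1 := ha.mem_map_of_eval_mem hJ (hf.mul hg) (by rwa [map_mul])
  exact (Ideal.mem_mul_span_pow_iff _ a m _).2 ⟨g, hg, mem_map_C_of_mul_mem hf0 h1, rfl⟩

end Primitive

section Colength

variable {A : Type*} [CommRing A] {S : Type*} [Fintype S]

/-- The colength of an ideal splits along the ideal obtained by adding finitely many elements. -/
lemma Ideal.length_quotient_eq_add (D : Ideal A) (m : S → A) :
    Module.length A (A ⧸ D) = Module.length A (A ⧸ D ⊔ Ideal.span (Set.range m)) +
      Module.length A ((S → A) ⧸ LinearMap.ker (D.mkQ ∘ₗ Fintype.linearCombination A m)) := by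
  set φ := D.mkQ ∘ₗ Fintype.linearCombination A m with hφ
  set ψ := (LinearMap.range φ).mkQ ∘ₗ D.mkQ with hψ
  have hψs : Function.Surjective ψ :=
    (Submodule.mkQ_surjective _).comp (Submodule.mkQ_surjective _)
  have hker : LinearMap.ker ψ = D ⊔ Ideal.span (Set.range m) := by
    rw [hψ, LinearMap.ker_comp, Submodule.ker_mkQ, hφ, LinearMap.range_comp,
      Submodule.comap_map_eq, Submodule.ker_mkQ, Fintype.range_linearCombination, sup_comm]
  rw [Module.length_eq_add_of_exact (LinearMap.range φ).subtype (LinearMap.range φ).mkQ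
    (Submodule.subtype_injective _) (Submodule.mkQ_surjective _)
    (LinearMap.exact_subtype_mkQ _), ← (ψ.quotKerEquivOfSurjective hψs).length_eq,
    ← φ.quotKerEquivRange.length_eq, (Submodule.quotEquivOfEq _ _ hker).length_eq, add_comm]

lemma Ideal.length_quotient_le_add {D J : Ideal A} {m : S → A}
    (h : ∀ c ∈ J, ∀ s, c * m s ∈ D) :
    Module.length A (A ⧸ D) ≤ Module.length A (A ⧸ D ⊔ Ideal.span (Set.range m)) +
      Fintype.card S * Module.length A (A ⧸ J) := by
  classical
  rw [Ideal.length_quotient_eq_add D m]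
  gcongr
  rw [← ENat.card_eq_coe_fintype_card, ← Module.length_pi,
    ← (Submodule.quotientPi fun _ : S ↦ J).length_eq]
  refine Module.length_le_of_surjective
    (Submodule.factor (p := Submodule.pi Set.univ fun _ : S ↦ J) fun c hc ↦ ?_)
    (Submodule.factor_surjective _)
  rw [LinearMap.mem_ker, LinearMap.comp_apply, Submodule.mkQ_apply, Submodule.Quotient.mk_eq_zero,
    Fintype.linearCombination_apply]
  exact Submodule.sum_mem _ fun s _ ↦ h _ (hc s trivial) s

lemma Ideal.add_le_length_quotient {D J : Ideal A} {m : S → A}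
    (h : ∀ c : S → A, ∑ s, c s * m s ∈ D → ∀ s, c s ∈ J) :
    Module.length A (A ⧸ D ⊔ Ideal.span (Set.range m)) +
      Fintype.card S * Module.length A (A ⧸ J) ≤ Module.length A (A ⧸ D) := by
  classical
  rw [Ideal.length_quotient_eq_add D m]
  gcongr
  rw [← ENat.card_eq_coe_fintype_card, ← Module.length_pi,
    ← (Submodule.quotientPi fun _ : S ↦ J).length_eq]
  refine Module.length_le_of_surjective
    (Submodule.factor (p' := Submodule.pi Set.univ fun _ : S ↦ J) fun c hc ↦ ?_)
    (Submodule.factor_surjective _)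
  rw [LinearMap.mem_ker, LinearMap.comp_apply, Submodule.mkQ_apply, Submodule.Quotient.mk_eq_zero,
    Fintype.linearCombination_apply] at hc
  exact fun s _ ↦ h c hc s

lemma Ideal.length_quotient_anti {J K : Ideal A} (h : J ≤ K) :
    Module.length A (A ⧸ K) ≤ Module.length A (A ⧸ J) :=
  Module.length_le_of_surjective (Submodule.factor h) (Submodule.factor_surjective h)

end Colength

section Forms

open MvPolynomial

variable {A : Type*} [CommRing A] {d : ℕ}

/-- The exponents of degree `n` in `d` variables. -/
abbrev FormExponent (d n : ℕ) : Type :=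
  ↥((Finset.univ : Finset (Fin d)).finsuppAntidiag n)

lemma FormExponent.degree_eq {n : ℕ} (s : FormExponent d n) : s.1.degree = n := by
  have := (Finset.mem_finsuppAntidiag.1 s.2).1
  rwa [Finsupp.degree_eq_sum]

lemma FormExponent.card (D n : ℕ) :
    Fintype.card (FormExponent (D + 1) n) = (n + D).choose D := by
  rw [Fintype.card_coe, Finset.card_finsuppAntidiag_nat_eq_choose, Finset.card_univ,
    Fintype.card_fin, ← Nat.choose_symm_add, add_comm n D]
  congr 1; omega

/-- The form with given coefficients. -/
noncomputable def formOfCoeff {n : ℕ} (c : FormExponent d n → A) : MvPolynomial (Fin d) A :=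
  ∑ s, monomial s.1 (c s)

lemma formOfCoeff_isHomogeneous {n : ℕ} (c : FormExponent d n → A) :
    (formOfCoeff c).IsHomogeneous n :=
  IsHomogeneous.sum _ _ _ fun s _ ↦ isHomogeneous_monomial _ s.degree_eq

lemma coeff_formOfCoeff {n : ℕ} (c : FormExponent d n → A) (s : FormExponent d n) :
    coeff s.1 (formOfCoeff c) = c s := by
  classical
  rw [formOfCoeff, coeff_sum, Finset.sum_eq_single s]
  · simp
  · intro t _ hts
    rw [coeff_monomial, if_neg fun h ↦ hts (Subtype.ext h)]
  · simp

lemma eval_formOfCoeff {n : ℕ} (a : Fin d → A) (c : FormExponent d n → A) :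
    eval a (formOfCoeff c) = ∑ s, c s * eval a (monomial s.1 1) := by
  simp [formOfCoeff, eval_monomial]

lemma formOfCoeff_coeff {n : ℕ} {F : MvPolynomial (Fin d) A} (hF : F.IsHomogeneous n) :
    formOfCoeff (fun s : FormExponent d n ↦ coeff s.1 F) = F := by
  classical
  ext α
  by_cases hα : α.degree = n
  · have hmem : α ∈ (Finset.univ : Finset (Fin d)).finsuppAntidiag n :=
      Finset.mem_finsuppAntidiag.2 ⟨by rwa [Finsupp.degree_eq_sum] at hα, Finset.subset_univ _⟩
    exact coeff_formOfCoeff _ ⟨α, hmem⟩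
  · rw [hF.coeff_eq_zero hα, (formOfCoeff_isHomogeneous _).coeff_eq_zero hα]

/-- The monomials of degree `n` in `a` generate `(a) ^ n`. -/
lemma Ideal.span_range_eval_monomial (a : Fin d → A) (n : ℕ) :
    Ideal.span (Set.range fun s : FormExponent d n ↦ eval a (monomial s.1 (1 : A))) =
      Ideal.span (Set.range a) ^ n := by
  refine le_antisymm (Ideal.span_le.2 ?_) fun x hx ↦ ?_
  · rintro _ ⟨s, rfl⟩
    exact (Ideal.mem_span_pow_iff_exists_isHomogeneous a _).2
      ⟨_, isHomogeneous_monomial _ s.degree_eq, rfl⟩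
  · obtain ⟨F, hF, rfl⟩ := (Ideal.mem_span_pow_iff_exists_isHomogeneous a _).1 hx
    rw [← formOfCoeff_coeff hF, eval_formOfCoeff]
    exact Submodule.sum_mem _ fun s _ ↦ Ideal.mul_mem_left _ _ (Ideal.subset_span ⟨s, rfl⟩)

end Forms

section PowerLength

open MvPolynomial

variable {A : Type*} [CommRing A] {D : ℕ} {a : Fin (D + 1) → A}

/-- An upper bound for the colength of `J Q ^ n`. -/
lemma Ideal.length_quotient_mul_span_pow_le (J : Ideal A) (a : Fin (D + 1) → A) (n : ℕ) :
    Module.length A (A ⧸ J * Ideal.span (Set.range a) ^ n) ≤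
      Module.length A (A ⧸ Ideal.span (Set.range a) ^ n) +
        ((n + D).choose D : ℕ) * Module.length A (A ⧸ J) := by
  have h := Ideal.length_quotient_le_add (D := J * Ideal.span (Set.range a) ^ n) (J := J)
    (m := fun s : FormExponent (D + 1) n ↦ eval a (monomial s.1 (1 : A))) (by
      intro c hc s
      refine Ideal.mul_mem_mul hc ?_
      rw [← Ideal.span_range_eval_monomial]
      exact Ideal.subset_span ⟨s, rfl⟩)
  rwa [Ideal.span_range_eval_monomial, FormExponent.card,
    sup_eq_right.2 Ideal.mul_le_right] at h

lemma IsQuasiRegularFamily.length_quotient_span_pow_succ (ha : IsQuasiRegularFamily a) (n : ℕ) :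
    Module.length A (A ⧸ Ideal.span (Set.range a) ^ (n + 1)) =
      Module.length A (A ⧸ Ideal.span (Set.range a) ^ n) +
        ((n + D).choose D : ℕ) * Module.length A (A ⧸ Ideal.span (Set.range a)) := by
  refine le_antisymm ?_ ?_
  · rw [pow_succ']
    exact Ideal.length_quotient_mul_span_pow_le _ a n
  · have h := Ideal.add_le_length_quotient (D := Ideal.span (Set.range a) ^ (n + 1))
      (J := Ideal.span (Set.range a))
      (m := fun s : FormExponent (D + 1) n ↦ eval a (monomial s.1 (1 : A))) (by
        intro c hc s
        rw [← eval_formOfCoeff, pow_succ'] at hc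
        have := MvPolynomial.mem_map_C_iff.1
          (ha.mem_map_of_eval_mem le_rfl (formOfCoeff_isHomogeneous c) hc) s.1
        rwa [coeff_formOfCoeff] at this)
    rwa [Ideal.span_range_eval_monomial, FormExponent.card,
      sup_eq_right.2 (Ideal.pow_le_pow_right n.le_succ)] at h

lemma IsQuasiRegularFamily.length_quotient_span_pow (ha : IsQuasiRegularFamily a) (n : ℕ) :
    Module.length A (A ⧸ Ideal.span (Set.range a) ^ n) =
      ((n + D).choose (D + 1) : ℕ) * Module.length A (A ⧸ Ideal.span (Set.range a)) := by
  induction n with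
  | zero =>
    have : Subsingleton (A ⧸ Ideal.span (Set.range a) ^ 0) :=
      Ideal.Quotient.subsingleton_iff.2 (by simp)
    rw [Module.length_eq_zero, zero_add, Nat.choose_succ_self]
    simp
  | succ n ih =>
    rw [ha.length_quotient_span_pow_succ, ih, ← add_mul, ← Nat.cast_add,
      show n + 1 + D = (n + D) + 1 by omega, Nat.choose_succ_succ, add_comm]

/-- If no primitive form of degree `n` in `a` maps `v` into `D`, then `(a) ^ n v` contributes the
maximal possible length modulo `D`. -/
lemma Ideal.add_choose_le_length_quotient [IsLocalRing A] {E : Ideal A} {v : A} {n : ℕ}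
    (h : ∀ f : MvPolynomial (Fin (D + 1)) A, f.IsHomogeneous n →
      MvPolynomial.map (residue A) f ≠ 0 → eval a f * v ∉ E) :
    Module.length A (A ⧸ E ⊔ Ideal.span (Set.range a) ^ n * Ideal.span {v}) +
      ((n + D).choose D : ℕ) ≤ Module.length A (A ⧸ E) := by
  have h := Ideal.add_le_length_quotient (D := E) (J := maximalIdeal A)
    (m := fun s : FormExponent (D + 1) n ↦ eval a (monomial s.1 (1 : A)) * v) (by
      intro c hc s
      by_contra hcs
      refine h _ (formOfCoeff_isHomogeneous c) (fun h0 ↦ hcs ?_) ?_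
      · rw [← residue_eq_zero_iff, ← coeff_formOfCoeff c s, ← coeff_map, h0, coeff_zero]
      · simpa only [eval_formOfCoeff, Finset.sum_mul, mul_assoc] using hc)
  have hspan : Ideal.span (Set.range fun s : FormExponent (D + 1) n ↦
      eval a (monomial s.1 (1 : A)) * v) = Ideal.span (Set.range a) ^ n * Ideal.span {v} := by
    rw [← Ideal.span_range_eval_monomial, Ideal.span_mul_span', Set.mul_singleton,
      ← Set.range_comp]
    rfl
  have : IsSimpleModule A (A ⧸ maximalIdeal A) :=
    isSimpleModule_iff_isCoatom.2 (maximalIdeal.isMaximal A).out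
  rwa [hspan, FormExponent.card, Module.length_eq_one A (A ⧸ maximalIdeal A), mul_one] at h

end PowerLength

section Asymptotics

open Filter Topology

lemma tendsto_choose_add_div_pow (s k : ℕ) :
    Tendsto (fun n : ℕ ↦ ((n + s).choose k : ℝ) / (n : ℝ) ^ k) atTop (𝓝 (1 / k.factorial)) := by
  have h1 : Tendsto (fun n : ℕ ↦ (n.choose k : ℝ) / (n : ℝ) ^ k) atTop
      (𝓝 (1 / k.factorial)) := by
    refine ((isEquivalent_choose k).div Asymptotics.IsEquivalent.refl).symm.tendsto_nhds
      (tendsto_const_nhds.congr' ?_)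
    filter_upwards [eventually_gt_atTop 0] with n hn
    have : (n : ℝ) ^ k ≠ 0 := by positivity
    simp only [Pi.div_apply]
    field_simp
  have h2 : Tendsto (fun n : ℕ ↦ ((n + s : ℕ) / n : ℝ) ^ k) atTop (𝓝 1) := by
    have h3 : Tendsto (fun n : ℕ ↦ (1 + s / n : ℝ) ^ k) atTop (𝓝 ((1 + 0) ^ k)) :=
      ((tendsto_const_div_atTop_nhds_zero_nat (s : ℝ)).const_add 1).pow k
    rw [add_zero, one_pow] at h3
    refine h3.congr' ?_
    filter_upwards [eventually_gt_atTop 0] with n hn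
    push_cast
    field_simp
  have h4 := (h1.comp (tendsto_add_atTop_nat s)).mul h2
  rw [mul_one] at h4
  refine h4.congr' ?_
  filter_upwards [eventually_gt_atTop 0] with n hn
  have : ((n + s : ℕ) : ℝ) ≠ 0 := by positivity
  simp only [Function.comp_apply, div_pow]
  field_simp

lemma tendsto_choose_add_div_pow_of_lt (s : ℕ) {j k : ℕ} (hjk : j < k) :
    Tendsto (fun n : ℕ ↦ ((n + s).choose j : ℝ) / (n : ℝ) ^ k) atTop (𝓝 0) := by
  have h1 : Tendsto (fun n : ℕ ↦ ((n : ℝ) ^ (k - j))⁻¹) atTop (𝓝 0) :=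
    tendsto_inv_atTop_zero.comp ((tendsto_pow_atTop (by omega)).comp tendsto_natCast_atTop_atTop)
  have h2 := (tendsto_choose_add_div_pow s j).mul h1
  rw [mul_zero] at h2
  refine h2.congr fun n ↦ ?_
  rw [← div_eq_mul_inv, div_div, ← pow_add, Nat.add_sub_cancel' hjk.le]

/-- The Hilbert function forces `e₀` to be at least the colength of the parameter ideal, and then
the first two coefficients leave room for only one copy of the leading term. -/
lemma hilbert_coeff_contradiction {D : ℕ} {H : ℕ → ℕ} {e : ℕ → ℤ} {N : ℕ}
    (hHS : ∀ n ≥ N, (H n : ℤ) = ∑ i ∈ Finset.range (D + 1 + 1),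
      (-1) ^ i * e i * ((n + (D + 1) - i).choose (D + 1 - i) : ℤ))
    (he : e 1 = e 0 - (H 0 : ℤ) + 1) {l r p q : ℕ}
    (hlow : ∀ n, l * (n + D).choose (D + 1) ≤ H (n + r))
    (hup : ∀ m, H (m + p + q) + (m + q + D).choose D + (m + p + D).choose D ≤
      l * (m + p + q + D).choose (D + 1) + (m + p + q + D).choose D * H 0) : False := by
  set R : ℕ → ℝ := fun n ↦ ∑ i ∈ Finset.range D,
    (-1) ^ (i + 2) * (e (i + 2) : ℝ) * ((n + (D + 1) - (i + 2)).choose (D + 1 - (i + 2)) : ℝ)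
    with hR
  have hH : ∀ n ≥ N, (H n : ℝ) = e 0 * ((n + D).choose (D + 1) + (n + D).choose D) -
      e 1 * (n + D).choose D + R n := by
    intro n hn
    have h1 : (H n : ℝ) = ((H n : ℤ) : ℝ) := by simp
    rw [h1, hHS n hn, Finset.sum_range_succ', Finset.sum_range_succ']
    push_cast
    have h2 : (n + (D + 1) - 0).choose (D + 1) =
      (n + D).choose D + (n + D).choose (D + 1) := Nat.choose_succ_succ _ _
    have h3 : R n = ∑ i ∈ Finset.range D, (-1) ^ (i + 1 + 1) * (e (i + 1 + 1) : ℝ) *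
        ((n + (D + 1) - (i + 1 + 1)).choose (D - (i + 1)) : ℝ) :=
      Finset.sum_congr rfl fun i _ ↦ by rw [show D + 1 - (i + 2) = D - (i + 1) by omega]
    rw [h2, h3, show n + (D + 1) - 1 = n + D by omega]
    push_cast
    ring
  have hRlim (t k : ℕ) (hk : D ≤ k) : Tendsto (fun n : ℕ ↦ R (n + t) / (n : ℝ) ^ k) atTop
      (𝓝 0) := by
    have h1 : Tendsto (fun n : ℕ ↦ ∑ i ∈ Finset.range D, (-1) ^ (i + 2) * (e (i + 2) : ℝ) *
        (((n + (t + D + 1 - (i + 2))).choose (D + 1 - (i + 2)) : ℝ) / (n : ℝ) ^ k)) atTop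
        (𝓝 (∑ i ∈ Finset.range D, (-1) ^ (i + 2) * (e (i + 2) : ℝ) * 0)) := by
      refine tendsto_finsetSum _ fun i hi ↦ ?_
      rw [Finset.mem_range] at hi
      exact (tendsto_choose_add_div_pow_of_lt _ (by omega)).const_mul _
    simp only [mul_zero, Finset.sum_const_zero] at h1
    refine h1.congr fun n ↦ ?_
    rw [hR, Finset.sum_div]
    refine Finset.sum_congr rfl fun i hi ↦ ?_
    rw [Finset.mem_range] at hi
    rw [mul_div_assoc, show n + t + (D + 1) - (i + 2) = n + (t + D + 1 - (i + 2)) by omega]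
  have hle : (l : ℝ) ≤ e 0 := by
    have h1 : Tendsto (fun n : ℕ ↦ (l : ℝ) * (((n + D).choose (D + 1) : ℝ) / (n : ℝ) ^ (D + 1)))
        atTop (𝓝 (l * (1 / (D + 1).factorial))) := (tendsto_choose_add_div_pow _ _).const_mul _
    have h2 : Tendsto (fun n : ℕ ↦
        (e 0 : ℝ) * (((n + (r + D)).choose (D + 1) : ℝ) / (n : ℝ) ^ (D + 1) +
          ((n + (r + D)).choose D : ℝ) / (n : ℝ) ^ (D + 1)) -
        e 1 * (((n + (r + D)).choose D : ℝ) / (n : ℝ) ^ (D + 1)) + R (n + r) / (n : ℝ) ^ (D + 1))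
        atTop (𝓝 (e 0 * (1 / (D + 1).factorial + 0) - e 1 * 0 + 0)) :=
      ((((tendsto_choose_add_div_pow _ _).add
        (tendsto_choose_add_div_pow_of_lt _ D.lt_succ_self)).const_mul _).sub
        ((tendsto_choose_add_div_pow_of_lt _ D.lt_succ_self).const_mul _)).add
        (hRlim _ _ D.le_succ)
    have h3 := le_of_tendsto_of_tendsto h1 h2 (by
      filter_upwards [eventually_ge_atTop N] with n hn
      have h4 : ((l * (n + D).choose (D + 1) : ℕ) : ℝ) ≤ H (n + r) := by exact_mod_cast hlow n
      rw [hH _ (by omega), add_assoc n r D] at h4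
      push_cast at h4
      rw [← mul_div_assoc, ← add_div, ← mul_div_assoc, ← mul_div_assoc, ← sub_div, ← add_div]
      gcongr)
    have h5 : (0 : ℝ) < 1 / (D + 1).factorial := by positivity
    refine le_of_mul_le_mul_right ?_ h5
    simpa using h3
  have h1 : Tendsto (fun m : ℕ ↦ ((m + (q + D)).choose D : ℝ) / (m : ℝ) ^ D +
      ((m + (p + D)).choose D : ℝ) / (m : ℝ) ^ D) atTop
      (𝓝 (1 / D.factorial + 1 / D.factorial)) :=
    (tendsto_choose_add_div_pow _ _).add (tendsto_choose_add_div_pow _ _)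
  have h2 : Tendsto (fun m : ℕ ↦ ((m + (p + q + D)).choose D : ℝ) / (m : ℝ) ^ D -
      R (m + (p + q)) / (m : ℝ) ^ D) atTop (𝓝 (1 / D.factorial - 0)) :=
    (tendsto_choose_add_div_pow _ _).sub (hRlim _ _ le_rfl)
  have h3 := le_of_tendsto_of_tendsto h1 h2 (by
    filter_upwards [eventually_ge_atTop N] with m hm
    rw [← add_div, ← sub_div]
    have h4 : ((H (m + p + q) + (m + q + D).choose D + (m + p + D).choose D : ℕ) : ℝ) ≤
      ((l * (m + p + q + D).choose (D + 1) + (m + p + q + D).choose D * H 0 : ℕ) : ℝ) := by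
      exact_mod_cast hup m
    push_cast at h4
    have he' : (e 1 : ℝ) = e 0 - H 0 + 1 := by exact_mod_cast congrArg (Int.cast : ℤ → ℝ) he
    rw [hH _ (by omega), he'] at h4
    simp only [← add_assoc] at h4 ⊢
    have h5 : (0 : ℝ) ≤ (m + p + q + D).choose (D + 1) := by positivity
    gcongr
    nlinarith [mul_le_mul_of_nonneg_right hle h5])
  have h5 : (0 : ℝ) < 1 / D.factorial := by positivity
  linarith

end Asymptotics

section FormDependent

open MvPolynomial

variable {A : Type*} [CommRing A] [IsLocalRing A] {D : ℕ} {a : Fin (D + 1) → A} {I : Ideal A}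

/-- Any two elements of the quotients `Iᵖ⁺¹ / I Qᵖ` are dependent over primitive forms, where `Q` is
the ideal generated by `a`. -/
def IsFormDependent (a : Fin (D + 1) → A) (I : Ideal A) : Prop :=
  ∀ (p q : ℕ) (u v : A), u ∈ I ^ (p + 1) → u ∉ I * Ideal.span (Set.range a) ^ p →
    v ∈ I ^ (q + 1) → ∃ (i j : ℕ) (f h : MvPolynomial (Fin (D + 1)) A),
      f.IsHomogeneous j ∧ map (residue A) f ≠ 0 ∧ h.IsHomogeneous i ∧ i + p = j + q ∧
      eval a f * v - eval a h * u ∈ I * Ideal.span (Set.range a) ^ (j + q)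

lemma Ideal.pow_add_eq_of_pow_succ_eq {A : Type*} [CommRing A] {I Q : Ideal A} {r : ℕ}
    (hr : I ^ (r + 1) = Q * I ^ r) (n : ℕ) : I ^ (n + r) = Q ^ n * I ^ r := by
  induction n with
  | zero => simp
  | succ n ih =>
    rw [show n + 1 + r = n + r + 1 by omega, pow_succ, ih, mul_assoc, ← pow_succ, hr, pow_succ,
      mul_assoc]

lemma IsQuasiRegularFamily.isFormDependent (ha : IsQuasiRegularFamily a)
    (hQI : Ideal.span (Set.range a) ≤ I) {r : ℕ}
    (hr : I ^ (r + 1) = Ideal.span (Set.range a) * I ^ r) {H : ℕ → ℕ}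
    (hH : ∀ n, Module.length A (A ⧸ I ^ (n + 1)) = H n) {e : ℕ → ℤ} {N : ℕ}
    (hHS : ∀ n ≥ N, (H n : ℤ) = ∑ i ∈ Finset.range (D + 1 + 1),
      (-1) ^ i * e i * ((n + (D + 1) - i).choose (D + 1 - i) : ℤ))
    (he : e 1 = e 0 - (H 0 : ℤ) + 1) : IsFormDependent a I := by
  intro p q u v hu huI hv
  by_contra! hcon
  set Q := Ideal.span (Set.range a) with hQ
  have hle (n : ℕ) : Module.length A (A ⧸ Q ^ n) ≤ H (n + r) := by
    rw [← hH]
    refine Ideal.length_quotient_anti ?_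
    rw [show n + r + 1 = (n + r) + 1 by omega, pow_succ, Ideal.pow_add_eq_of_pow_succ_eq hr n]
    exact Ideal.mul_le_left.trans Ideal.mul_le_left
  obtain ⟨l, hl⟩ : ∃ l : ℕ, Module.length A (A ⧸ Q) = l := by
    refine ENat.ne_top_iff_exists.1 (ne_top_of_le_ne_top (ENat.natCast_ne_top (H (1 + r))) ?_)
      |>.imp fun _ ↦ Eq.symm
    exact pow_one Q ▸ hle 1
  have hpow (n : ℕ) : Module.length A (A ⧸ Q ^ n) = (l * (n + D).choose (D + 1) : ℕ) := by
    rw [ha.length_quotient_span_pow, hl, ← Nat.cast_mul, mul_comm]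
  refine hilbert_coeff_contradiction hHS he (l := l) (r := r) (p := p) (q := q) (fun n ↦ ?_)
    fun m ↦ ?_
  · exact_mod_cast (hpow n) ▸ hle n
  set n := m + p + q with hn
  set E := I * Q ^ n ⊔ Q ^ (m + q) * Ideal.span {u} with hE
  have h1 := Ideal.add_choose_le_length_quotient (a := a) (E := I * Q ^ n) (v := u) (n := m + q) (by
    intro f hf hf0 hfu
    rw [show n = m + q + p by omega] at hfu
    exact huI (ha.mem_mul_pow_of_eval_mul_mem hQI hf hf0 hfu))
  have h2 := Ideal.add_choose_le_length_quotient (a := a) (E := E) (v := v) (n := m + p) (by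
    intro f hf hf0 hfv
    obtain ⟨w, hw, z, hz, hwz⟩ := Submodule.mem_sup.1 hfv
    obtain ⟨t, ht, rfl⟩ := Ideal.mem_mul_span_singleton.1 hz
    obtain ⟨h, hh, rfl⟩ := (Ideal.mem_span_pow_iff_exists_isHomogeneous a _).1 ht
    refine hcon (m + q) (m + p) f h hf hf0 hh (by omega) ?_
    rw [← hwz, add_sub_cancel_right, ← hn]
    exact hw)
  have h3 : (H n : ℕ∞) ≤ Module.length A (A ⧸ E ⊔ Q ^ (m + p) * Ideal.span {v}) := by
    rw [← hH]
    refine Ideal.length_quotient_anti (sup_le (sup_le ?_ ?_) ?_)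
    · rw [pow_succ']
      exact Ideal.mul_mono_right (Ideal.pow_right_mono hQI n)
    · rw [show n + 1 = m + q + (p + 1) by omega, pow_add I]
      exact Ideal.mul_mono (Ideal.pow_right_mono hQI _) ((Ideal.span_singleton_le_iff_mem _).2 hu)
    · rw [show n + 1 = m + p + (q + 1) by omega, pow_add I]
      exact Ideal.mul_mono (Ideal.pow_right_mono hQI _) ((Ideal.span_singleton_le_iff_mem _).2 hv)
  have h4 := Ideal.length_quotient_mul_span_pow_le I a n
  have h5 : Module.length A (A ⧸ I) = H 0 := by
    have := hH 0
    rwa [zero_add, pow_one] at this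
  rw [← hQ, hpow, h5] at h4
  have h6 : ((H n + (m + q + D).choose D + (m + p + D).choose D : ℕ) : ℕ∞) ≤
      (l * (n + D).choose (D + 1) + (n + D).choose D * H 0 : ℕ) := by
    push_cast at h4 ⊢
    refine le_trans ?_ h4
    refine le_trans ?_ h1
    rw [add_right_comm]
    gcongr
    refine le_trans ?_ h2
    gcongr
  exact_mod_cast h6

lemma IsFormDependent.maximalIdeal_mul_pow_le (hdep : IsFormDependent a I)
    (ha : IsQuasiRegularFamily a) (hQI : Ideal.span (Set.range a) ≤ I) (q : ℕ) :
    maximalIdeal A * I ^ (q + 1) ≤ I * Ideal.span (Set.range a) ^ q := by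
  refine Ideal.mul_le.2 fun c hc v hv ↦ ?_
  by_contra hcv
  obtain ⟨i, j, f, h, hf, hf0, hh, hij, hfh⟩ :=
    hdep q q (c * v) v (Ideal.mul_mem_left _ _ hv) hcv hv
  obtain rfl : i = j := by omega
  refine hcv (Ideal.mul_mem_left _ _ (ha.mem_mul_pow_of_eval_mul_mem hQI (f := f - C c * h)
    (hf.sub (hh.C_mul c)) ?_ (m := q) (x := v) ?_))
  · rwa [map_sub, map_mul, map_C, (residue_eq_zero_iff c).2 hc, C_0, zero_mul, sub_zero]
  · have : eval a (f - C c * h) * v = eval a f * v - eval a h * (c * v) := by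
      simp only [map_sub, map_mul, eval_C]
      ring
    rwa [this]

end FormDependent

section LinearForms

open MvPolynomial

lemma MvPolynomial.IsHomogeneous.exists_isHomogeneous_mul_eq {σ R : Type*} [CommRing R]
    {f g : MvPolynomial σ R} {i n : ℕ} (hf : f.IsHomogeneous i)
    (hfg : (f * g).IsHomogeneous (i + n)) : ∃ g', g'.IsHomogeneous n ∧ f * g = f * g' := by
  let _ := MvPolynomial.gradedAlgebra (σ := σ) (R := R)
  have h := DirectSum.coe_decompose_mul_add_of_left_mem (homogeneousSubmodule σ R) (j := n)
    (b := g) hf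
  rw [DirectSum.decompose_of_mem_same _ hfg] at h
  exact ⟨_, (DirectSum.decompose (homogeneousSubmodule σ R) g n).2, h⟩

/-- Over a field, if `f` divides the products of the form `h` with two independent linear forms and
`h` has degree one more than `f`, then `f` divides `h`. -/
lemma MvPolynomial.exists_mul_eq_of_mul_eq_mul {k : Type*} [Field k] {d : ℕ}
    {f h Z₁ Z₂ L₁ L₂ : MvPolynomial (Fin d) k} {j : ℕ} (hf0 : f ≠ 0) (hf : f.IsHomogeneous j)
    (hh : h.IsHomogeneous (j + 1)) (hL₁ : L₁.IsHomogeneous 1) (hL₂ : L₂.IsHomogeneous 1)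
    (h₁ : f * Z₁ = h * L₁) (h₂ : f * Z₂ = h * L₂) {s : Fin d →₀ ℕ} (hs₁ : coeff s L₁ = 0)
    (hs₂ : coeff s L₂ ≠ 0) (hL₁0 : L₁ ≠ 0) :
    ∃ g, g.IsHomogeneous 1 ∧ h = f * g := by
  have hL₂0 : L₂ ≠ 0 := by
    rintro rfl
    simp at hs₂
  have hirr : Irreducible L₁ := by
    refine irreducible_of_totalDegree_eq_one (hL₁.totalDegree hL₁0) fun x hx ↦ ?_
    refine isUnit_iff_ne_zero.2 ?_
    rintro rfl
    exact hL₁0 (MvPolynomial.ext _ _ fun α ↦ by simpa using hx α)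
  have hcross : Z₁ * L₂ = Z₂ * L₁ := by
    refine mul_left_cancel₀ hf0 ?_
    rw [← mul_assoc, h₁, ← mul_assoc, h₂]
    ring
  have hndvd : ¬ L₁ ∣ L₂ := by
    rintro ⟨t, ht⟩
    have ht0 : t ≠ 0 := by
      rintro rfl
      exact hL₂0 (by simpa using ht)
    have hdeg := totalDegree_mul_of_isDomain hL₁0 ht0
    rw [← ht, hL₁.totalDegree hL₁0, hL₂.totalDegree hL₂0] at hdeg
    rw [totalDegree_eq_zero_iff_eq_C.1 (by omega : t.totalDegree = 0), mul_comm] at ht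
    rw [ht, coeff_C_mul, hs₁, mul_zero] at hs₂
    exact hs₂ rfl
  obtain ⟨g, rfl⟩ := (hirr.prime.dvd_or_dvd (⟨Z₂, by rw [hcross, mul_comm]⟩ :
    L₁ ∣ Z₁ * L₂)).resolve_right hndvd
  have hfg : h = f * g := by
    refine mul_right_cancel₀ hL₁0 ?_
    rw [← h₁]
    ring
  subst hfg
  exact hf.exists_isHomogeneous_mul_eq hh

variable {A : Type*} [CommRing A] [IsLocalRing A] {d : ℕ}

lemma MvPolynomial.map_residue_eq_zero_iff {F : MvPolynomial (Fin d) A} :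
    map (residue A) F = 0 ↔ F ∈ (maximalIdeal A).map (C : A →+* MvPolynomial (Fin d) A) := by
  rw [MvPolynomial.mem_map_C_iff, MvPolynomial.ext_iff]
  simp [coeff_map, residue_eq_zero_iff]

/-- Forms over the residue field lift. -/
lemma MvPolynomial.IsHomogeneous.exists_map_residue_eq {n : ℕ}
    {g : MvPolynomial (Fin d) (ResidueField A)} (hg : g.IsHomogeneous n) :
    ∃ G : MvPolynomial (Fin d) A, G.IsHomogeneous n ∧ map (residue A) G = g := by
  choose c hc using residue_surjective (R := A)
  refine ⟨formOfCoeff fun s ↦ c (coeff s.1 g), formOfCoeff_isHomogeneous _, ?_⟩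
  conv_rhs => rw [← formOfCoeff_coeff hg]
  simp [formOfCoeff, hc]

/-- A form with coefficients in `K + (x)` is `x` times a form, modulo `K`. -/
lemma MvPolynomial.IsHomogeneous.exists_sub_C_mul_mem {A : Type*} [CommRing A]
    {F : MvPolynomial (Fin d) A} {n : ℕ} (hF : F.IsHomogeneous n) {J K : Ideal A} {x : A}
    (hJ : J ≤ K ⊔ Ideal.span {x}) (hFJ : F ∈ J.map (C : A →+* MvPolynomial (Fin d) A)) :
    ∃ G : MvPolynomial (Fin d) A, G.IsHomogeneous n ∧
      F - C x * G ∈ K.map (C : A →+* MvPolynomial (Fin d) A) := by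
  have hc (s : FormExponent d n) : ∃ c, coeff s.1 F - x * c ∈ K := by
    obtain ⟨w, hw, z, hz, hwz⟩ := Submodule.mem_sup.1 (hJ (MvPolynomial.mem_map_C_iff.1 hFJ s.1))
    obtain ⟨c, rfl⟩ := Ideal.mem_span_singleton.1 hz
    exact ⟨c, by rwa [← hwz, add_sub_cancel_right]⟩
  choose c hc using hc
  refine ⟨formOfCoeff c, formOfCoeff_isHomogeneous c, ?_⟩
  rw [← formOfCoeff_coeff (hF.sub ((formOfCoeff_isHomogeneous c).C_mul x))]
  refine Submodule.sum_mem _ fun s _ ↦ ?_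
  rw [MvPolynomial.mem_map_C_iff]
  intro α
  classical
  rw [coeff_monomial]
  split_ifs
  · beta_reduce
    rw [coeff_sub, coeff_C_mul, coeff_formOfCoeff]
    exact hc s
  · exact K.zero_mem

lemma MvPolynomial.map_residue_eq_zero_of_C_mul_mem {K : Ideal A} {x : A} (hx : x ∉ K)
    {F : MvPolynomial (Fin d) A} (hF : C x * F ∈ K.map (C : A →+* MvPolynomial (Fin d) A)) :
    map (residue A) F = 0 := by
  rw [map_residue_eq_zero_iff, MvPolynomial.mem_map_C_iff]
  intro α
  by_contra hα
  have h1 := MvPolynomial.mem_map_C_iff.1 hF α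
  rw [coeff_C_mul, mul_comm] at h1
  have hu : IsUnit (coeff α F) := by
    by_contra h
    exact hα ((mem_maximalIdeal _).2 h)
  exact hx ((K.unit_mul_mem_iff_mem hu).1 h1)

/-- An ideal maximal among those containing `I₀` and avoiding `x`. -/
lemma IsLocalRing.exists_ideal_le_sup_span [IsNoetherianRing A] {I₀ J : Ideal A} {x : A}
    (hJ : maximalIdeal A * J ≤ I₀) (hx : x ∉ I₀) :
    ∃ K : Ideal A, I₀ ≤ K ∧ x ∉ K ∧ J ≤ K ⊔ Ideal.span {x} := by
  obtain ⟨K, ⟨hIK, hxK⟩, hmax⟩ := set_has_maximal_iff_noetherian.2 ‹IsNoetherianRing A›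
    {K : Ideal A | I₀ ≤ K ∧ x ∉ K} ⟨I₀, le_rfl, hx⟩
  refine ⟨K, hIK, hxK, fun z hz ↦ ?_⟩
  by_cases hzK : z ∈ K
  · exact Ideal.mem_sup_left hzK
  have hlt : K < K ⊔ Ideal.span {z} := lt_of_le_of_ne le_sup_left fun h ↦
    hzK (h ▸ Ideal.mem_sup_right (Ideal.mem_span_singleton_self z))
  have hxz : x ∈ K ⊔ Ideal.span {z} := by
    by_contra h
    exact hmax _ ⟨hIK.trans le_sup_left, h⟩ hlt
  obtain ⟨w, hw, t, ht, hwt⟩ := Submodule.mem_sup.1 hxz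
  obtain ⟨c, rfl⟩ := Ideal.mem_span_singleton.1 ht
  have hc : IsUnit c := by
    by_contra h
    refine hxK (hwt ▸ K.add_mem hw (hIK (hJ ?_)))
    rw [mul_comm z]
    exact Ideal.mul_mem_mul ((mem_maximalIdeal _).2 h) hz
  rw [← Ideal.unit_mul_mem_iff_mem _ hc, mul_comm, eq_sub_of_add_eq' hwt]
  exact sub_mem (Ideal.mem_sup_right (Ideal.mem_span_singleton_self x)) (Ideal.mem_sup_left hw)

end LinearForms

section PowThree

open MvPolynomial

variable {A : Type*} [CommRing A] [IsLocalRing A] {D : ℕ} {a : Fin (D + 1) → A} {I : Ideal A}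

/-- If the form relating `z` and `y` factors through a linear form modulo the maximal ideal, then
`z` lies in `Q I²`. -/
lemma IsFormDependent.mem_mul_pow_two (hdep : IsFormDependent a I) (ha : IsQuasiRegularFamily a)
    (hQI : Ideal.span (Set.range a) ≤ I) {y z : A} (hy : y ∈ I ^ 2)
    {j : ℕ} {f h g : MvPolynomial (Fin (D + 1)) A} (hf : f.IsHomogeneous j)
    (hf0 : map (residue A) f ≠ 0) (hh : h.IsHomogeneous (j + 1)) (hg : g.IsHomogeneous 1)
    (hfh : eval a f * z - eval a h * y ∈ I * Ideal.span (Set.range a) ^ (j + 2))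
    (hfg : map (residue A) (h - f * g) = 0) : z ∈ Ideal.span (Set.range a) * I ^ 2 := by
  have hgQ : eval a g ∈ Ideal.span (Set.range a) := by
    have := (Ideal.mem_span_pow_iff_exists_isHomogeneous a (n := 1) _).2 ⟨g, hg, rfl⟩
    rwa [pow_one] at this
  set Q := Ideal.span (Set.range a) with hQ
  have h1 : eval a (h - f * g) * y ∈ I * Q ^ (j + 2) := by
    have h2 : eval a (h - f * g) ∈ maximalIdeal A * Q ^ (j + 1) :=
      (Ideal.mem_mul_span_pow_iff _ a _ _).2
        ⟨_, hh.sub (hf.mul hg), map_residue_eq_zero_iff.1 hfg, rfl⟩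
    have h3 := Ideal.mul_mem_mul h2 hy
    have h4 : maximalIdeal A * Q ^ (j + 1) * I ^ 2 ≤ I * Q ^ (j + 2) := calc
      _ = maximalIdeal A * I ^ (1 + 1) * Q ^ (j + 1) := by ring
      _ ≤ I * Q ^ 1 * Q ^ (j + 1) :=
        Ideal.mul_mono_left (hdep.maximalIdeal_mul_pow_le ha hQI 1)
      _ = I * Q ^ (j + 2) := by ring
    exact h4 h3
  have h5 : z - eval a g * y ∈ I * Q ^ 2 := by
    refine ha.mem_mul_pow_of_eval_mul_mem hQI hf hf0 ?_
    have : eval a f * (z - eval a g * y) =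
        (eval a f * z - eval a h * y) + eval a (h - f * g) * y := by
      simp only [map_sub, map_mul]
      ring
    rw [this]
    exact add_mem hfh h1
  have h6 : I * Q ^ 2 ≤ Q * I ^ 2 := calc
    _ = Q * (I * Q) := by ring
    _ ≤ Q * (I * I) := Ideal.mul_mono_right (Ideal.mul_mono_right hQI)
    _ = Q * I ^ 2 := by ring
  rw [← sub_add_cancel z (eval a g * y)]
  exact add_mem (h6 h5) (Ideal.mul_mem_mul hgQ hy)

lemma IsFormDependent.pow_three_le_of_not_le (hdep : IsFormDependent a I)
    (ha : IsQuasiRegularFamily a) (hQI : Ideal.span (Set.range a) ≤ I)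
    (hI : ¬ I ^ 2 ≤ Ideal.span (Set.range a)) : I ^ 3 ≤ Ideal.span (Set.range a) * I ^ 2 := by
  obtain ⟨y, hy, hyQ⟩ := SetLike.not_le_iff_exists.1 hI
  intro z hz
  obtain ⟨i, j, f, h, hf, hf0, hh, hij, hfh⟩ := hdep 1 2 y z hy
    (fun h ↦ hyQ (by simpa using Ideal.mul_le_right h)) hz
  obtain rfl : i = j + 1 := by omega
  set Q := Ideal.span (Set.range a) with hQ
  have hzJ : z ∈ (Q ⊔ Ideal.span {y}) * Q ^ 1 := by
    refine ha.mem_mul_pow_of_eval_mul_mem le_sup_left hf hf0 ?_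
    rw [← sub_add_cancel (eval a f * z) (eval a h * y)]
    refine add_mem (?_ : _ ∈ (Q ⊔ Ideal.span {y}) * Q ^ (j + 1)) ?_
    · have : I * Q ^ (j + 2) ≤ Q * Q ^ (j + 1) := by
        rw [← pow_succ']
        exact Ideal.mul_le_right
      exact Ideal.mul_mono_left le_sup_left (this hfh)
    · rw [mul_comm (eval a h)]
      exact Ideal.mul_mem_mul (Ideal.mem_sup_right (Ideal.mem_span_singleton_self y))
        ((Ideal.mem_span_pow_iff_exists_isHomogeneous a _).2 ⟨h, hh, rfl⟩)
  rw [Ideal.sup_mul, mul_comm (Ideal.span {y})] at hzJ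
  obtain ⟨w, hw, t, ht, hwt⟩ := Submodule.mem_sup.1 hzJ
  obtain ⟨c, hc, rfl⟩ := Ideal.mem_mul_span_singleton.1 ht
  obtain ⟨g, hg, rfl⟩ := (Ideal.mem_span_pow_iff_exists_isHomogeneous a _).1 hc
  refine hdep.mem_mul_pow_two ha hQI hy hf hf0 hh hg hfh ?_
  by_contra hne
  refine hyQ ?_
  have h1 : eval a (h - f * g) * y ∈ Q ^ (j + 1 + 1) := by
    have : eval a (h - f * g) * y = eval a f * w - (eval a f * z - eval a h * y) := by
      rw [← hwt]
      simp only [map_sub, map_mul]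
      ring
    rw [this]
    refine sub_mem ?_ (Ideal.mul_le_right hfh)
    rw [show Q ^ (j + 1 + 1) = Q ^ j * (Q * Q ^ 1) by ring]
    exact Ideal.mul_mem_mul ((Ideal.mem_span_pow_iff_exists_isHomogeneous a _).2 ⟨f, hf, rfl⟩) hw
  simpa using ha.mem_pow_of_eval_mul_mem (hh.sub (hf.mul hg)) hne h1

/-- A linear form with value in `I²`, outside `I Q`, controls the position of `I²` and `I³`. -/
lemma IsFormDependent.pow_le_mul_pow (hdep : IsFormDependent a I) (ha : IsQuasiRegularFamily a)
    (hQI : Ideal.span (Set.range a) ≤ I) {J : Ideal A} (hIJ : I ≤ J) {y : A} (hy : y ∈ I ^ 2)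
    (hyI : y ∉ I * Ideal.span (Set.range a)) (hyJ : y ∈ J * Ideal.span (Set.range a)) (n : ℕ) :
    I ^ (n + 1) ≤ J * Ideal.span (Set.range a) ^ n := by
  intro v hv
  obtain ⟨i, j, f, h, hf, hf0, hh, hij, hfh⟩ := hdep 1 n y v hy (by rwa [pow_one]) hv
  refine ha.mem_mul_pow_of_eval_mul_mem (hQI.trans hIJ) hf hf0 ?_
  rw [← sub_add_cancel (eval a f * v) (eval a h * y)]
  refine add_mem (Ideal.mul_mono_left hIJ hfh) ?_
  rw [← hij, pow_succ', ← mul_assoc, mul_comm (eval a h)]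
  exact Ideal.mul_mem_mul hyJ ((Ideal.mem_span_pow_iff_exists_isHomogeneous a _).2 ⟨h, hh, rfl⟩)

/-- The case in which the coefficients of the linear form generate a cyclic module modulo `I`. -/
lemma IsQuasiRegularFamily.pow_three_le_of_le_sup_span
    (ha : IsQuasiRegularFamily a) (hQI : Ideal.span (Set.range a) ≤ I) {J : Ideal A} (hIJ : I ≤ J)
    (hmJ : maximalIdeal A * J ≤ I) {Y : MvPolynomial (Fin (D + 1)) A} (hY : Y.IsHomogeneous 1)
    (hYI : Y ∉ I.map (C : A →+* MvPolynomial (Fin (D + 1)) A))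
    (hYJ : Y ∈ J.map (C : A →+* MvPolynomial (Fin (D + 1)) A)) (hy : eval a Y ∈ I ^ 2)
    (hpow : ∀ n, I ^ (n + 1) ≤ J * Ideal.span (Set.range a) ^ n) {x : A} (hxJ : x ∈ J)
    (hx : J ≤ I ⊔ Ideal.span {x}) : I ^ 3 ≤ Ideal.span (Set.range a) * I ^ 2 := by
  obtain ⟨G, hG, hYG⟩ := hY.exists_sub_C_mul_mem hx hYJ
  set Q := Ideal.span (Set.range a) with hQ
  have hG0 : map (residue A) G ≠ 0 := by
    intro h0
    refine hYI ?_
    rw [← sub_add_cancel Y (C x * G)]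
    refine add_mem hYG (MvPolynomial.mem_map_C_iff.2 fun α ↦ ?_)
    rw [coeff_C_mul, mul_comm]
    exact hmJ (Ideal.mul_mem_mul
      (MvPolynomial.mem_map_C_iff.1 (map_residue_eq_zero_iff.1 h0) α) hxJ)
  have hxt (t : A) (ht : t ∈ I) : x * t ∈ J * Q := by
    rw [← pow_one Q]
    refine ha.mem_mul_pow_of_eval_mul_mem (hQI.trans hIJ) hG hG0 (hpow 2 ?_)
    have h1 : eval a (Y - C x * G) ∈ I * I := by
      have := (Ideal.mem_mul_span_pow_iff I a 1 _).2 ⟨_, hY.sub (hG.C_mul x), hYG, rfl⟩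
      rw [pow_one] at this
      exact Ideal.mul_mono_right hQI this
    have h2 : eval a G * (x * t) = (eval a Y - eval a (Y - C x * G)) * t := by
      simp only [map_sub, map_mul, eval_C]
      ring
    rw [h2, pow_succ]
    rw [← pow_two] at h1
    exact Ideal.mul_mem_mul (sub_mem hy h1) ht
  have hJQ : J * Q ≤ Q * I ⊔ Q * Ideal.span {x} := by
    rw [← Ideal.mul_sup, mul_comm]
    exact Ideal.mul_mono_right hx
  rw [pow_succ]
  refine Ideal.mul_le.2 fun w hw t ht ↦ ?_
  have hw' : w ∈ J * Q := by simpa using hpow 1 hw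
  obtain ⟨w₀, hw₀, s, hs, rfl⟩ := Submodule.mem_sup.1 (hJQ hw')
  obtain ⟨l, hl, rfl⟩ := Ideal.mem_mul_span_singleton.1 hs
  have hQI2 : Q * I ≤ I ^ 2 := by
    rw [pow_two]
    exact Ideal.mul_mono_left hQI
  have hlx : l * x ∈ I ^ 2 := by
    rw [← add_sub_cancel_left w₀ (l * x)]
    exact sub_mem hw (hQI2 hw₀)
  obtain ⟨w₁, hw₁, s, hs, hws⟩ := Submodule.mem_sup.1 (hJQ (hxt t ht))
  obtain ⟨l', hl', rfl⟩ := Ideal.mem_mul_span_singleton.1 hs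
  have h3 : (w₀ + l * x) * t = w₀ * t + l * w₁ + l' * (l * x) := by
    rw [add_mul, mul_assoc, ← hws]
    ring
  rw [h3]
  refine add_mem (add_mem ?_ (Ideal.mul_mem_mul hl (hQI2 hw₁))) (Ideal.mul_mem_mul hl' hlx)
  rw [pow_two, ← mul_assoc]
  exact Ideal.mul_mem_mul hw₀ ht

/-- The case in which the coefficients of the linear form generate a noncyclic module modulo
`I`. -/
lemma IsFormDependent.pow_three_le_of_notMem_sup_span [IsNoetherianRing A]
    (hdep : IsFormDependent a I) (ha : IsQuasiRegularFamily a)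
    (hQI : Ideal.span (Set.range a) ≤ I) {J : Ideal A}
    (hmJ : maximalIdeal A * J ≤ I) {Y : MvPolynomial (Fin (D + 1)) A} (hY : Y.IsHomogeneous 1)
    (hyI : eval a Y ∉ I * Ideal.span (Set.range a))
    (hYJ : Y ∈ J.map (C : A →+* MvPolynomial (Fin (D + 1)) A)) (hy : eval a Y ∈ I ^ 2)
    (hpow : ∀ n, I ^ (n + 1) ≤ J * Ideal.span (Set.range a) ^ n) {s t : Fin (D + 1) →₀ ℕ}
    (hs : coeff s Y ∉ I) (ht : coeff t Y ∉ I ⊔ Ideal.span {coeff s Y}) :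
    I ^ 3 ≤ Ideal.span (Set.range a) * I ^ 2 := by
  obtain ⟨K₁, hIK₁, htK₁, hJK₁⟩ := IsLocalRing.exists_ideal_le_sup_span (hmJ.trans le_sup_left) ht
  obtain ⟨K₂, hIK₂, hsK₂, hJK₂⟩ := IsLocalRing.exists_ideal_le_sup_span hmJ hs
  have hsK₁ : coeff s Y ∈ K₁ :=
    hIK₁ (Ideal.mem_sup_right (Ideal.mem_span_singleton_self _))
  obtain ⟨L₁, hL₁, hYL₁⟩ := hY.exists_sub_C_mul_mem hJK₁ hYJ
  obtain ⟨L₂, hL₂, hYL₂⟩ := hY.exists_sub_C_mul_mem hJK₂ hYJ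
  have hs₁ : coeff s (map (residue A) L₁) = 0 := by
    rw [coeff_map]
    by_contra h
    refine htK₁ ((K₁.unit_mul_mem_iff_mem ((residue_ne_zero_iff_isUnit _).1 h)).1 ?_)
    have h1 := MvPolynomial.mem_map_C_iff.1 hYL₁ s
    rwa [coeff_sub, coeff_C_mul, K₁.sub_mem_iff_right hsK₁, mul_comm] at h1
  have hcoeff {K : Ideal A} {u : Fin (D + 1) →₀ ℕ} {x : A} {L : MvPolynomial (Fin (D + 1)) A}
      (hIK : I ≤ K) (hx : x ∈ J) (hu : coeff u Y ∉ K)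
      (hL : Y - C x * L ∈ K.map (C : A →+* MvPolynomial (Fin (D + 1)) A)) :
      coeff u (map (residue A) L) ≠ 0 := by
    intro h0
    rw [coeff_map, residue_eq_zero_iff] at h0
    have h1 := MvPolynomial.mem_map_C_iff.1 hL u
    rw [coeff_sub, coeff_C_mul, mul_comm] at h1
    exact hu ((K.sub_mem_iff_left (hIK (hmJ (Ideal.mul_mem_mul h0 hx)))).1 h1)
  have hL₁0 : map (residue A) L₁ ≠ 0 := by
    intro h0
    refine hcoeff (le_sup_left.trans hIK₁) (MvPolynomial.mem_map_C_iff.1 hYJ t) htK₁ hYL₁ ?_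
    rw [h0, coeff_zero]
  have hs₂ : coeff s (map (residue A) L₂) ≠ 0 :=
    hcoeff hIK₂ (MvPolynomial.mem_map_C_iff.1 hYJ s) hsK₂ hYL₂
  intro z hz
  obtain ⟨i, j, f, h, hf, hf0, hh, hij, hfh⟩ := hdep 1 2 _ z hy (by rwa [pow_one]) hz
  obtain rfl : i = j + 1 := by omega
  obtain ⟨Z, hZ, hZJ, rfl⟩ := (Ideal.mem_mul_span_pow_iff J a 2 _).1 (hpow 2 hz)
  have hfZ : f * Z - h * Y ∈ I.map (C : A →+* MvPolynomial (Fin (D + 1)) A) := by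
    refine ha.mem_map_of_eval_mem hQI ((hf.mul hZ).sub (hh.mul hY)) ?_
    simpa only [map_sub, map_mul] using hfh
  have key {K : Ideal A} {x : A} {Z' L : MvPolynomial (Fin (D + 1)) A} (hIK : I ≤ K) (hx : x ∉ K)
      (hZ' : Z - C x * Z' ∈ K.map (C : A →+* MvPolynomial (Fin (D + 1)) A))
      (hL : Y - C x * L ∈ K.map (C : A →+* MvPolynomial (Fin (D + 1)) A)) :
      map (residue A) f * map (residue A) Z' = map (residue A) h * map (residue A) L := by
    rw [← map_mul, ← map_mul, ← sub_eq_zero, ← map_sub]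
    refine map_residue_eq_zero_of_C_mul_mem hx ?_
    have : C x * (f * Z' - h * L) = f * Z - h * Y - f * (Z - C x * Z') + h * (Y - C x * L) := by
      ring
    rw [this]
    exact add_mem (sub_mem (Ideal.map_mono hIK hfZ) (Ideal.mul_mem_left _ _ hZ'))
      (Ideal.mul_mem_left _ _ hL)
  obtain ⟨Z₁, -, hZ₁⟩ := hZ.exists_sub_C_mul_mem hJK₁ hZJ
  obtain ⟨Z₂, -, hZ₂⟩ := hZ.exists_sub_C_mul_mem hJK₂ hZJ
  obtain ⟨g, hg, hfg⟩ := MvPolynomial.exists_mul_eq_of_mul_eq_mul hf0 (hf.map _) (hh.map _)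
    (hL₁.map _) (hL₂.map _) (key (le_sup_left.trans hIK₁) htK₁ hZ₁ hYL₁)
    (key hIK₂ hsK₂ hZ₂ hYL₂) hs₁ hs₂ hL₁0
  obtain ⟨G, hG, rfl⟩ := hg.exists_map_residue_eq
  refine hdep.mem_mul_pow_two ha hQI hy hf hf0 hh hG hfh ?_
  rw [map_sub, map_mul, hfg, sub_self]

/-- If two elements of the quotients `Iⁿ⁺¹ / I Qⁿ` are always dependent over primitive forms, then
`I³ = Q I²`. -/
theorem IsFormDependent.pow_three_eq [IsNoetherianRing A] (hdep : IsFormDependent a I)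
    (ha : IsQuasiRegularFamily a) (hQI : Ideal.span (Set.range a) ≤ I) :
    I ^ 3 = Ideal.span (Set.range a) * I ^ 2 := by
  have hle : Ideal.span (Set.range a) * I ^ 2 ≤ I ^ 3 := by
    rw [pow_succ' I 2]
    exact Ideal.mul_mono_left hQI
  refine le_antisymm ?_ hle
  by_cases hI2 : I ^ 2 ≤ Ideal.span (Set.range a)
  swap
  · exact hdep.pow_three_le_of_not_le ha hQI hI2
  by_cases hred : I ^ 2 ≤ I * Ideal.span (Set.range a)
  · rw [pow_succ]
    refine (Ideal.mul_mono_left hred).trans_eq ?_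
    ring
  obtain ⟨y, hy, hyI⟩ := SetLike.not_le_iff_exists.1 hred
  obtain ⟨Y, hY, rfl⟩ := (Ideal.mem_span_pow_iff_exists_isHomogeneous a (n := 1) _).1
    (by rw [pow_one]; exact hI2 hy)
  set J := I ⊔ Ideal.span (Set.range fun α ↦ coeff α Y) with hJ
  have hYJ : Y ∈ J.map (C : A →+* MvPolynomial (Fin (D + 1)) A) :=
    MvPolynomial.mem_map_C_iff.2 fun α ↦ Ideal.mem_sup_right (Ideal.subset_span ⟨α, rfl⟩)
  have hmul (K : Ideal A) (hK : Y ∈ K.map (C : A →+* MvPolynomial (Fin (D + 1)) A)) :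
      eval a Y ∈ K * Ideal.span (Set.range a) := by
    rw [← pow_one (Ideal.span (Set.range a))]
    exact (Ideal.mem_mul_span_pow_iff _ a 1 _).2 ⟨Y, hY, hK, rfl⟩
  have hmJ : maximalIdeal A * J ≤ I := by
    rw [hJ, Ideal.mul_sup]
    refine sup_le Ideal.mul_le_right (Ideal.mul_le.2 fun c hc x hx ↦ ?_)
    have h1 : C c * Y ∈ I.map (C : A →+* MvPolynomial (Fin (D + 1)) A) := by
      refine ha.mem_map_of_eval_mem hQI (hY.C_mul c) (hdep.maximalIdeal_mul_pow_le ha hQI 1 ?_)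
      rw [map_mul, eval_C]
      exact Ideal.mul_mem_mul hc hy
    induction hx using Submodule.span_induction with
    | mem x hx =>
      obtain ⟨α, rfl⟩ := hx
      simpa using MvPolynomial.mem_map_C_iff.1 h1 α
    | zero => simp
    | add x x' _ _ hx hx' => simpa [mul_add] using add_mem hx hx'
    | smul r x _ hx => simpa [mul_left_comm] using I.mul_mem_left r hx
  have hpow := hdep.pow_le_mul_pow ha hQI le_sup_left hy hyI (hmul J hYJ)
  have hYI : Y ∉ I.map (C : A →+* MvPolynomial (Fin (D + 1)) A) := fun h ↦ hyI (hmul I h)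
  obtain ⟨s, hs⟩ : ∃ s, coeff s Y ∉ I := by
    by_contra! h
    exact hYI (MvPolynomial.mem_map_C_iff.2 h)
  by_cases ht : ∃ t, coeff t Y ∉ I ⊔ Ideal.span {coeff s Y}
  · obtain ⟨t, ht⟩ := ht
    exact hdep.pow_three_le_of_notMem_sup_span ha hQI hmJ hY hyI hYJ hy hpow hs ht
  · push Not at ht
    refine ha.pow_three_le_of_le_sup_span hQI le_sup_left hmJ hY hYI hYJ hy hpow
      (MvPolynomial.mem_map_C_iff.1 hYJ s) (sup_le le_sup_left (Ideal.span_le.2 ?_))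
    rintro _ ⟨t, rfl⟩
    exact ht t

end PowThree

/-- If `e₁ = e₀ - ℓ_A(A/I) + 1` then `I³ = QI²`.  Here `H n = ℓ_A(A/I^{n+1})`
(so `H 0 = ℓ_A(A/I)`) and the Hilbert coefficients `e i` are specified by the
Hilbert–Samuel polynomial. -/
theorem pow_three_eq_of_e1 (A : Type*) [CommRing A] [IsLocalRing A] [IsNoetherianRing A]
    [Infinite (ResidueField A)]
    (d : ℕ) (hd : 0 < d) (hCM : IsCohenMacaulayLocal A d)
    (I Q : Ideal A) (hI : IsPrimaryToMax A I)
    (a : Fin d → A) (hQ : Q = Ideal.span (Set.range a)) (hQI : Q ≤ I)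
    (hred : ∃ r : ℕ, I ^ (r + 1) = Q * I ^ r)
    (H : ℕ → ℕ)
    (hH : ∀ n : ℕ, moduleLength A (A ⧸ I ^ (n + 1)) = (H n : ℕ∞))
    (e : ℕ → ℤ) (N : ℕ)
    (hHS : ∀ n ≥ N, (H n : ℤ) =
      ∑ i ∈ Finset.range (d + 1),
        (-1) ^ i * e i * ((n + d - i).choose (d - i) : ℤ))
    (he : e 1 = e 0 - (H 0 : ℤ) + 1) :
    I ^ 3 = Q * I ^ 2 := by
  obtain ⟨D, rfl⟩ : ∃ D, d = D + 1 := ⟨d - 1, by omega⟩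
  obtain ⟨rs, hlen, hmem, hrs⟩ := hCM.2
  obtain ⟨r, hr⟩ := hred
  subst hQ
  have hrad : maximalIdeal A ≤ (Ideal.span (Set.range a)).radical := by
    refine hI.2.trans ?_
    rw [← Ideal.radical_pow I r.succ_ne_zero]
    exact Ideal.radical_mono (hr.trans_le Ideal.mul_le_left)
  obtain ⟨b, hb, hqr⟩ := IsLocalRing.exists_isQuasiRegularFamily hlen hmem hrs a
    (hQI.trans hI.1) hrad
  rw [← hb] at hQI hr ⊢
  have hH' (n : ℕ) : Module.length A (A ⧸ I ^ (n + 1)) = H n := by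
    have := hH n
    rw [moduleLength, ← Module.coe_length] at this
    exact_mod_cast this
  exact (hqr.isFormDependent hQI hr hH' hHS he).pow_three_eq hqr hQI
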